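/- Let N ≥ 2. Then for every φ ∈ C_c^∞(ℝ^N) (smooth, compactly supported, real-valued), ∫_{ℝ^N} |x|^N ∑_{(i_1,…,i_N)∈{1,…,N}^N} ( ∂^N φ/∂x_{i_1}⋯∂x_{i_N}(x) ) · ( ∂^N log|x| / ∂x_{i_1}⋯∂x_{i_N}(x) ) dx = − ℓ_N · ω_{N−1} · φ(0). Equivalently, log|x| is a fundamental solution (up to the factor −ℓ_N ω_{N−1}) of the operator (−1)^N ∑_{i_1,…,i_N} ∂^N(|x|^N ∂^N ·). -/

import Mathlib

open MeasureTheory Metric Filter Matrix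

noncomputable section

/-- The mixed partial derivative `∂^m u / ∂x_{i 0} ⋯ ∂x_{i (m-1)} (x)`, realized as the
iterated Fréchet derivative applied to the corresponding standard basis vectors. -/
def mixedPartial (N m : ℕ) (u : EuclideanSpace ℝ (Fin N) → ℝ)
    (i : Fin m → Fin N) (x : EuclideanSpace ℝ (Fin N)) : ℝ :=
  iteratedFDeriv ℝ m u x fun k => EuclideanSpace.single (i k) 1

/-- The Frobenius norm `|∇^m u (x)|` of the tensor of `m`-th order partial derivatives. -/
def gradNorm (N m : ℕ) (u : EuclideanSpace ℝ (Fin N) → ℝ)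
    (x : EuclideanSpace ℝ (Fin N)) : ℝ :=
  Real.sqrt (∑ i : Fin m → Fin N, mixedPartial N m u i x ^ 2)

/-- The function `x ↦ log |x|`. -/
def logNorm (N : ℕ) (x : EuclideanSpace ℝ (Fin N)) : ℝ := Real.log ‖x‖

/-- The constant `ℓ_N = ∑ (∂^N log|x|/∂x_{i_1}⋯∂x_{i_N} (e_1))²`. -/
def ell (N : ℕ) (hN : 0 < N) : ℝ :=
  ∑ i : Fin N → Fin N,
    mixedPartial N N (logNorm N) i (EuclideanSpace.single (⟨0, hN⟩ : Fin N) 1) ^ 2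

/-- `ω_{N-1}`, the surface measure of the unit sphere `𝕊^{N-1} ⊂ ℝ^N`,
expressed as `N` times the volume of the unit ball. -/
def omegaSphere (N : ℕ) : ℝ :=
  N * (volume (ball (0 : EuclideanSpace ℝ (Fin N)) 1)).toReal

/-!
For `m ≥ 1` the function `‖x‖ ^ (2 * m) * ⟪∇^m u x, ∇^m log ‖x‖⟫`, with the Frobenius inner product,
transforms covariantly in `u` under rotations, and under dilations because these change `log ‖x‖`
only by a constant; the measure `dx / ‖x‖ ^ n` is invariant under both. Averaging over rotations
therefore replaces the test function `φ` by a radial function `f ‖x‖` with `f 0 = φ 0`. In the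
variable `s = log ‖x‖`, Faà di Bruno's formula turns the pairing into `∑ₖ aₖ (r d/dr)^k f`,
`1 ≤ k ≤ m`, with constant coefficients. Against `dr / r` each term is a total derivative, so it
contributes minus the value of `(r d/dr)^(k - 1) f` at `r = 0`, which vanishes unless `k = 1`; and
`a₁ = ‖∇^m log ‖e‖‖²` on unit vectors `e`, which is `ℓ_N` for `m = n = N`.
-/

open Module
open scoped RealInnerProductSpace ContDiff Topology

-- Multilinear maps into `ℝ` are nested too deeply for the default depth to find their norms.
set_option maxSynthPendingDepth 2

section Frobenius

variable {E : Type*} [NormedAddCommGroup E] [InnerProductSpace ℝ E]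

theorem sum_prod_inner_smul_map_orthonormalBasis {ι F : Type*} [Fintype ι]
    [NormedAddCommGroup F] [NormedSpace ℝ F] (b : OrthonormalBasis ι ℝ E) {m : ℕ}
    (A : E [×m]→L[ℝ] F) (v : Fin m → E) :
    ∑ i : Fin m → ι, (∏ k, ⟪b (i k), v k⟫) • A (fun k ↦ b (i k)) = A v := by
  classical
  conv_rhs => rw [← funext fun k ↦ b.sum_repr' (v k)]
  simp only [A.map_sum, A.map_smul_univ]

variable [FiniteDimensional ℝ E]

variable (E) in
/-- The Frobenius inner product `∑ i, A (b (i 1), …, b (i m)) * B (b (i 1), …, b (i m))` of two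
`m`-linear forms, bundled as a continuous bilinear map. The orthonormal basis `b` in the definition
is immaterial by `frobeniusInner_eq_sum`. -/
def frobeniusInner (m : ℕ) : (E [×m]→L[ℝ] ℝ) →L[ℝ] (E [×m]→L[ℝ] ℝ) →L[ℝ] ℝ :=
  ∑ i : Fin m → Fin (finrank ℝ E),
    let eval := ContinuousMultilinearMap.apply ℝ (fun _ : Fin m ↦ E) ℝ
      fun k ↦ stdOrthonormalBasis ℝ E (i k)
    eval.smulRight eval

theorem frobeniusInner_eq_sum {ι : Type*} [Fintype ι] {m : ℕ} (b : OrthonormalBasis ι ℝ E)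
    (A B : E [×m]→L[ℝ] ℝ) :
    frobeniusInner E m A B = ∑ i : Fin m → ι, A (fun k ↦ b (i k)) * B (fun k ↦ b (i k)) := by
  let b' := stdOrthonormalBasis ℝ E
  calc frobeniusInner E m A B
      = ∑ j : Fin m → Fin (finrank ℝ E), A (fun k ↦ b' (j k)) * B (fun k ↦ b' (j k)) := by
        simp [frobeniusInner, b', _root_.sum_apply]
    _ = ∑ j : Fin m → Fin (finrank ℝ E), ∑ i : Fin m → ι,
          (∏ k, ⟪b' (j k), b (i k)⟫) * A (fun k ↦ b' (j k)) * B (fun k ↦ b (i k)) := by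
        refine Finset.sum_congr rfl fun j _ ↦ ?_
        rw [← sum_prod_inner_smul_map_orthonormalBasis b B, Finset.mul_sum]
        simp only [real_inner_comm, smul_eq_mul, mul_left_comm, mul_assoc]
    _ = ∑ i : Fin m → ι, A (fun k ↦ b (i k)) * B (fun k ↦ b (i k)) := by
        rw [Finset.sum_comm]
        refine Finset.sum_congr rfl fun i _ ↦ ?_
        rw [← Finset.sum_mul, ← sum_prod_inner_smul_map_orthonormalBasis b' A fun k ↦ b (i k)]
        simp only [smul_eq_mul]

theorem frobeniusInner_compContinuousLinearMap {m : ℕ} (R : E ≃ₗᵢ[ℝ] E) (A B : E [×m]→L[ℝ] ℝ) :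
    frobeniusInner E m
        (A.compContinuousLinearMap fun _ ↦ (R.toContinuousLinearEquiv : E →L[ℝ] E))
        (B.compContinuousLinearMap fun _ ↦ (R.toContinuousLinearEquiv : E →L[ℝ] E)) =
      frobeniusInner E m A B := by
  rw [frobeniusInner_eq_sum (stdOrthonormalBasis ℝ E),
    frobeniusInner_eq_sum ((stdOrthonormalBasis ℝ E).map R)]
  rfl

end Frobenius

section Isometries

variable {E : Type*} [NormedAddCommGroup E] [InnerProductSpace ℝ E]

theorem exists_linearIsometryEquiv_apply_eq {x y : E} (h : ‖x‖ = ‖y‖) :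
    ∃ R : E ≃ₗᵢ[ℝ] E, R x = y :=
  ⟨_, Submodule.reflection_sub h⟩

theorem exists_norm_smul_linearIsometryEquiv_eq {e : E} (he : ‖e‖ = 1) (x : E) :
    ∃ R : E ≃ₗᵢ[ℝ] E, ‖x‖ • R e = x := by
  obtain ⟨R, hR⟩ := exists_linearIsometryEquiv_apply_eq (x := ‖x‖ • e) (y := x) (by
    simp [norm_smul, he])
  exact ⟨R, by rw [← map_smul, hR]⟩

end Isometries

section CompRight

variable {E F G : Type*} [NormedAddCommGroup E] [NormedSpace ℝ E] [NormedAddCommGroup F]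
  [NormedSpace ℝ F] [NormedAddCommGroup G] [NormedSpace ℝ G]

theorem iteratedFDeriv_comp_continuousLinearEquiv (L : E ≃L[ℝ] F) (u : F → G) (x : E) (m : ℕ) :
    iteratedFDeriv ℝ m (u ∘ L) x =
      (iteratedFDeriv ℝ m u (L x)).compContinuousLinearMap fun _ ↦ (L : E →L[ℝ] F) := by
  simpa only [Set.preimage_univ, iteratedFDerivWithin_univ] using
    L.iteratedFDerivWithin_comp_right u uniqueDiffOn_univ (Set.mem_univ (L x)) m

theorem iteratedFDeriv_comp_smul {r : ℝ} (hr : r ≠ 0) (u : E → G) (x : E) (m : ℕ) :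
    iteratedFDeriv ℝ m (fun y ↦ u (r • y)) x = r ^ m • iteratedFDeriv ℝ m u (r • x) := by
  ext v
  have h := iteratedFDeriv_comp_continuousLinearEquiv
    (ContinuousLinearEquiv.smulLeft (R₁ := ℝ) (M₁ := E) (Units.mk0 r hr)) u x m
  have h' := congrArg (fun A ↦ A v) h
  simpa [Function.comp_def, ContinuousMultilinearMap.map_smul_univ, Units.smul_def] using h'

end CompRight

section LogNorm

variable {E : Type*} [NormedAddCommGroup E] [InnerProductSpace ℝ E]

theorem contDiffAt_log_norm {x : E} (hx : x ≠ 0) {n : WithTop ℕ∞} :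
    ContDiffAt ℝ n (fun y : E ↦ Real.log ‖y‖) x :=
  (contDiffAt_norm ℝ hx).log (norm_ne_zero_iff.2 hx)

theorem iteratedFDeriv_log_norm_linearIsometryEquiv (R : E ≃ₗᵢ[ℝ] E) (x : E) (m : ℕ) :
    (iteratedFDeriv ℝ m (fun y : E ↦ Real.log ‖y‖) (R x)).compContinuousLinearMap
        (fun _ ↦ (R.toContinuousLinearEquiv : E →L[ℝ] E)) =
      iteratedFDeriv ℝ m (fun y : E ↦ Real.log ‖y‖) x := by
  have h := iteratedFDeriv_comp_continuousLinearEquiv R.toContinuousLinearEquiv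
    (fun y : E ↦ Real.log ‖y‖) x m
  simpa [Function.comp_def] using h.symm

theorem iteratedFDeriv_log_norm_smul {m : ℕ} (hm : m ≠ 0) {r : ℝ} (hr : r ≠ 0) {x : E}
    (hx : x ≠ 0) :
    r ^ m • iteratedFDeriv ℝ m (fun y : E ↦ Real.log ‖y‖) (r • x) =
      iteratedFDeriv ℝ m (fun y : E ↦ Real.log ‖y‖) x := by
  have hlog : (fun y : E ↦ Real.log ‖r • y‖) =ᶠ[𝓝 x]
      (fun _ ↦ Real.log ‖r‖) + fun y ↦ Real.log ‖y‖ := by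
    filter_upwards [isOpen_ne.mem_nhds hx] with y hy
    rw [norm_smul, Real.log_mul (norm_ne_zero_iff.2 hr) (norm_ne_zero_iff.2 hy)]
    rfl
  rw [← iteratedFDeriv_comp_smul hr (fun y ↦ Real.log ‖y‖), (hlog.iteratedFDeriv ℝ m).eq_of_nhds,
    iteratedFDeriv_add_apply contDiffAt_const (contDiffAt_log_norm hx),
    iteratedFDeriv_const_of_ne hm]
  simp

theorem norm_pow_mul_norm_iteratedFDeriv_log_norm {m : ℕ} (hm : m ≠ 0) {e : E} (he : ‖e‖ = 1)
    {x : E} (hx : x ≠ 0) :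
    ‖x‖ ^ m * ‖iteratedFDeriv ℝ m (fun y : E ↦ Real.log ‖y‖) x‖ =
      ‖iteratedFDeriv ℝ m (fun y : E ↦ Real.log ‖y‖) e‖ := by
  obtain ⟨R, hR⟩ := exists_norm_smul_linearIsometryEquiv_eq he x
  have hRe : R e ≠ 0 := by simp [← norm_ne_zero_iff, he]
  have hrot := R.norm_iteratedFDeriv_comp_right (𝕜 := ℝ) (fun y : E ↦ Real.log ‖y‖) e m
  simp only [Function.comp_def, R.norm_map] at hrot
  rw [hrot, ← iteratedFDeriv_log_norm_smul hm (norm_ne_zero_iff.2 hx) hRe, hR, norm_smul,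
    norm_pow, norm_norm]

theorem aestronglyMeasurable_iteratedFDeriv_log_norm [FiniteDimensional ℝ E] [Nontrivial E]
    [MeasurableSpace E] [BorelSpace E] (m : ℕ) :
    AEStronglyMeasurable (iteratedFDeriv ℝ m fun y : E ↦ Real.log ‖y‖) := by
  have hcont : ContinuousOn (iteratedFDeriv ℝ m fun y : E ↦ Real.log ‖y‖) {0}ᶜ := fun x hx ↦
    ((contDiffAt_log_norm (n := m) hx).iteratedFDeriv_right
      (m := 0) (by simp)).continuousAt.continuousWithinAt
  simpa using hcont.aestronglyMeasurable (μ := volume) (measurableSet_singleton 0).compl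

end LogNorm

section LogPairing

variable {E : Type*} [NormedAddCommGroup E] [InnerProductSpace ℝ E] [FiniteDimensional ℝ E]

/-- The pairing of `∇^m u` with `∇^m log ‖·‖`, weighted by `‖x‖ ^ (2 * m)`: this weight makes it
invariant under dilations as well as under rotations. -/
def logPairing (m : ℕ) (u : E → ℝ) (x : E) : ℝ :=
  ‖x‖ ^ (2 * m) * frobeniusInner E m (iteratedFDeriv ℝ m u x)
    (iteratedFDeriv ℝ m (fun y ↦ Real.log ‖y‖) x)

theorem logPairing_comp_linearIsometryEquiv (m : ℕ) (u : E → ℝ) (R : E ≃ₗᵢ[ℝ] E) (x : E) :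
    logPairing m (u ∘ R) x = logPairing m u (R x) := by
  have hu : iteratedFDeriv ℝ m (u ∘ R) x = (iteratedFDeriv ℝ m u (R x)).compContinuousLinearMap
      fun _ ↦ (R.toContinuousLinearEquiv : E →L[ℝ] E) :=
    iteratedFDeriv_comp_continuousLinearEquiv R.toContinuousLinearEquiv u x m
  rw [logPairing, logPairing, hu, ← iteratedFDeriv_log_norm_linearIsometryEquiv R x,
    frobeniusInner_compContinuousLinearMap, R.norm_map]

theorem logPairing_comp_smul {m : ℕ} (hm : m ≠ 0) (u : E → ℝ) {r : ℝ} (hr : r ≠ 0) {x : E}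
    (hx : x ≠ 0) : logPairing m (fun y ↦ u (r • y)) x = logPairing m u (r • x) := by
  rw [logPairing, logPairing, iteratedFDeriv_comp_smul hr,
    ← iteratedFDeriv_log_norm_smul hm hr hx, norm_smul, mul_pow]
  simp only [map_smul, _root_.smul_apply, smul_eq_mul, pow_mul, Real.norm_eq_abs, sq_abs]
  ring

end LogPairing

section EulerDeriv

/-- The Euler operator `r d/dr`, generator of the dilations of the half-line. -/
def eulerDeriv (f : ℝ → ℝ) (r : ℝ) : ℝ := r * deriv f r

theorem eulerDeriv_zero (f : ℝ → ℝ) : eulerDeriv f 0 = 0 := zero_mul _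

theorem contDiff_iterate_eulerDeriv {f : ℝ → ℝ} {k n : ℕ} (hf : ContDiff ℝ (n + k : ℕ) f) :
    ContDiff ℝ n (eulerDeriv^[k] f) := by
  induction k generalizing n with
  | zero => exact hf
  | succ k ih =>
    rw [Function.iterate_succ_apply']
    have h : ContDiff ℝ (n + 1 : ℕ) (eulerDeriv^[k] f) := ih (by rwa [add_right_comm])
    exact contDiff_id.mul ((contDiff_succ_iff_deriv (n := n)).1 (by exact_mod_cast h)).2.2

theorem hasCompactSupport_iterate_eulerDeriv {f : ℝ → ℝ} (hf : HasCompactSupport f) (k : ℕ) :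
    HasCompactSupport (eulerDeriv^[k] f) := by
  induction k with
  | zero => exact hf
  | succ k ih =>
    rw [Function.iterate_succ_apply']
    exact ih.deriv.mul_left

theorem iteratedDeriv_comp_mul_exp {f : ℝ → ℝ} {k : ℕ} (hf : ContDiff ℝ k f) (r : ℝ) :
    iteratedDeriv k (fun s ↦ f (r * Real.exp s)) =
      fun s ↦ eulerDeriv^[k] f (r * Real.exp s) := by
  induction k with
  | zero => simp
  | succ k ih =>
    rw [iteratedDeriv_succ, ih (hf.of_le (by simp))]
    ext s
    have hdiff : Differentiable ℝ (eulerDeriv^[k] f) :=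
      (contDiff_iterate_eulerDeriv (n := 1) (by rwa [add_comm])).differentiable one_ne_zero
    have hexp : HasDerivAt (fun s ↦ r * Real.exp s) (r * Real.exp s) s :=
      (Real.hasDerivAt_exp s).const_mul r
    rw [Function.iterate_succ_apply', eulerDeriv, mul_comm]
    exact ((hdiff _).hasDerivAt.comp s hexp).deriv

theorem inv_mul_eulerDeriv (f : ℝ → ℝ) {r : ℝ} (hr : r ≠ 0) : r⁻¹ * eulerDeriv f r = deriv f r :=
  inv_mul_cancel_left₀ hr _

theorem integrableOn_inv_mul_eulerDeriv {f : ℝ → ℝ} (hf : ContDiff ℝ 1 f)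
    (hsupp : HasCompactSupport f) :
    IntegrableOn (fun r ↦ r⁻¹ * eulerDeriv f r) (Set.Ioi 0) := by
  have hderiv : Integrable (deriv f) :=
    (hf.continuous_deriv le_rfl).integrable_of_hasCompactSupport hsupp.deriv
  refine hderiv.integrableOn.congr_fun (fun r hr ↦ ?_) measurableSet_Ioi
  exact (inv_mul_eulerDeriv f (ne_of_gt hr)).symm

theorem integral_inv_mul_eulerDeriv {f : ℝ → ℝ} (hf : ContDiff ℝ 1 f)
    (hsupp : HasCompactSupport f) :
    ∫ r in Set.Ioi 0, r⁻¹ * eulerDeriv f r = -f 0 := by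
  rw [← hsupp.integral_Ioi_deriv_eq hf 0]
  exact setIntegral_congr_fun measurableSet_Ioi fun r hr ↦ inv_mul_eulerDeriv f (ne_of_gt hr)

theorem integral_inv_mul_sum_iterate_eulerDeriv {f : ℝ → ℝ} {m : ℕ} (hm : m ≠ 0)
    (hf : ContDiff ℝ m f) (hsupp : HasCompactSupport f) (a : ℕ → ℝ) :
    ∫ r in Set.Ioi 0, r⁻¹ * ∑ k ∈ Finset.range m, eulerDeriv^[k + 1] f r * a k = -(f 0 * a 0) := by
  have hfk {k : ℕ} (hk : k ∈ Finset.range m) : ContDiff ℝ 1 (eulerDeriv^[k] f) :=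
    contDiff_iterate_eulerDeriv (n := 1)
      (hf.of_le (by exact_mod_cast (add_comm 1 k).trans_le (Finset.mem_range.1 hk)))
  have hsuppk (k : ℕ) := hasCompactSupport_iterate_eulerDeriv hsupp k
  calc ∫ r in Set.Ioi 0, r⁻¹ * ∑ k ∈ Finset.range m, eulerDeriv^[k + 1] f r * a k
      = ∑ k ∈ Finset.range m, (∫ r in Set.Ioi 0, r⁻¹ * eulerDeriv (eulerDeriv^[k] f) r) * a k := by
        simp only [Finset.mul_sum, ← mul_assoc, Function.iterate_succ_apply']
        rw [integral_finsetSum _ fun k hk ↦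
          (integrableOn_inv_mul_eulerDeriv (hfk hk) (hsuppk k)).mul_const _]
        simp only [integral_mul_const]
    _ = ∑ k ∈ Finset.range m, -eulerDeriv^[k] f 0 * a k :=
        Finset.sum_congr rfl fun k hk ↦ by
          rw [integral_inv_mul_eulerDeriv (hfk hk) (hsuppk k)]
    _ = -(f 0 * a 0) := by
        rw [Finset.sum_eq_single_of_mem 0 (Finset.mem_range.2 (Nat.pos_of_ne_zero hm))]
        · simp
        · intro k _ hk
          obtain ⟨j, rfl⟩ := Nat.exists_eq_succ_of_ne_zero hk
          simp [Function.iterate_succ_apply', eulerDeriv_zero]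

end EulerDeriv

section FaaDiBruno

variable {E : Type*} [NormedAddCommGroup E] [NormedSpace ℝ E]

/-- The `m`-th order Bell polynomial of degree `k` in the derivatives of `g`: the coefficient of the
`k`-th derivative of `h` in Faà di Bruno's formula for the `m`-th derivative of `h ∘ g`. -/
def bellTensor (m k : ℕ) (g : E → ℝ) (x : E) : E [×m]→L[ℝ] ℝ :=
  ∑ c : OrderedFinpartition m with c.length = k,
    c.compAlongOrderedFinpartition (ContinuousMultilinearMap.mkPiAlgebraFin ℝ c.length ℝ)
      fun j ↦ iteratedFDeriv ℝ (c.partSize j) g x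

theorem iteratedFDeriv_comp_eq_sum_bellTensor {g : E → ℝ} {h : ℝ → ℝ} {x : E} {m : ℕ}
    (hm : m ≠ 0) (hh : ContDiffAt ℝ m h (g x)) (hg : ContDiffAt ℝ m g x) :
    iteratedFDeriv ℝ m (h ∘ g) x =
      ∑ k ∈ Finset.range m, iteratedDeriv (k + 1) h (g x) • bellTensor m (k + 1) g x := by
  have hterm (c : OrderedFinpartition m) :
      (ftaylorSeries ℝ h (g x)).compAlongOrderedFinpartition (ftaylorSeries ℝ g x) c =
        iteratedDeriv c.length h (g x) •
          c.compAlongOrderedFinpartition (ContinuousMultilinearMap.mkPiAlgebraFin ℝ c.length ℝ)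
            fun j ↦ iteratedFDeriv ℝ (c.partSize j) g x := by
    ext v
    simp [FormalMultilinearSeries.compAlongOrderedFinpartition_apply, ftaylorSeries,
      iteratedFDeriv_apply_eq_iteratedDeriv_mul_prod, List.prod_ofFn, mul_comm,
      OrderedFinpartition.applyOrderedFinpartition_apply]
  have hlength (c : OrderedFinpartition m) : c.length - 1 ∈ Finset.range m := by
    have := c.length_le
    grind
  rw [iteratedFDeriv_comp hh hg le_rfl, FormalMultilinearSeries.taylorComp,
    ← Finset.sum_fiberwise_of_maps_to (fun c _ ↦ hlength c)]
  refine Finset.sum_congr rfl fun k _ ↦ ?_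
  rw [bellTensor, Finset.smul_sum]
  refine Finset.sum_congr ?_ ?_
  · ext c
    have := c.length_pos (Nat.pos_of_ne_zero hm)
    grind
  · intro c hc
    rw [hterm, ← (Finset.mem_filter.1 hc).2]

theorem bellTensor_one {g : E → ℝ} {x : E} {m : ℕ} (hm : m ≠ 0) (hg : ContDiffAt ℝ m g x) :
    bellTensor m 1 g x = iteratedFDeriv ℝ m g x := by
  have hid := iteratedFDeriv_comp_eq_sum_bellTensor hm contDiffAt_id hg
  simpa [iteratedDeriv_id, Finset.sum_ite_eq', ite_smul, Nat.pos_of_ne_zero hm] using hid.symm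

end FaaDiBruno

section Radial

variable {E : Type*} [NormedAddCommGroup E] [InnerProductSpace ℝ E] [FiniteDimensional ℝ E]

theorem logPairing_comp_norm {m : ℕ} (hm : m ≠ 0) {f : ℝ → ℝ} (hf : ContDiff ℝ m f) {e : E}
    (he : ‖e‖ = 1) {x : E} (hx : x ≠ 0) :
    logPairing m (fun y ↦ f ‖y‖) x =
      ∑ k ∈ Finset.range m, eulerDeriv^[k + 1] f ‖x‖ *
        frobeniusInner E m (bellTensor m (k + 1) (fun y ↦ Real.log ‖y‖) e)
          (iteratedFDeriv ℝ m (fun y ↦ Real.log ‖y‖) e) := by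
  obtain ⟨R, hR⟩ := exists_norm_smul_linearIsometryEquiv_eq he x
  have he0 : e ≠ 0 := by simp [← norm_ne_zero_iff, he]
  have hx' : ‖x‖ ≠ 0 := norm_ne_zero_iff.2 hx
  let h (s : ℝ) : ℝ := f (‖x‖ * Real.exp s)
  have hcomp : ((fun y ↦ f ‖‖x‖ • y‖) ∘ R : E → ℝ) =ᶠ[𝓝 e] h ∘ fun y ↦ Real.log ‖y‖ := by
    filter_upwards [isOpen_ne.mem_nhds he0] with y hy
    simp [h, norm_smul, Real.exp_log (norm_pos_iff.2 hy)]
  have hh : ContDiff ℝ m h := hf.comp (contDiff_const.mul Real.contDiff_exp)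
  calc logPairing m (fun y ↦ f ‖y‖) x
      = logPairing m ((fun y ↦ f ‖‖x‖ • y‖) ∘ R) e := by
        conv_lhs => rw [← hR]
        rw [logPairing_comp_linearIsometryEquiv,
          logPairing_comp_smul hm (fun y ↦ f ‖y‖) hx' (by simpa using he0)]
    _ = frobeniusInner E m (iteratedFDeriv ℝ m (h ∘ fun y ↦ Real.log ‖y‖) e)
          (iteratedFDeriv ℝ m (fun y ↦ Real.log ‖y‖) e) := by
        rw [logPairing, (hcomp.iteratedFDeriv ℝ m).eq_of_nhds, he, one_pow, one_mul]
    _ = _ := by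
        rw [iteratedFDeriv_comp_eq_sum_bellTensor hm hh.contDiffAt (contDiffAt_log_norm he0)]
        simp only [map_sum, map_smul, _root_.sum_apply, _root_.smul_apply, smul_eq_mul]
        refine Finset.sum_congr rfl fun k hk ↦ ?_
        have hfk : ContDiff ℝ (k + 1 : ℕ) f := hf.of_le (by exact_mod_cast Finset.mem_range.1 hk)
        simp [h, iteratedDeriv_comp_mul_exp hfk, he]

theorem integral_logPairing_comp_norm_div [MeasurableSpace E] [BorelSpace E] {m : ℕ} (hm : m ≠ 0)
    {f : ℝ → ℝ} (hf : ContDiff ℝ m f) (hsupp : HasCompactSupport f) {e : E} (he : ‖e‖ = 1) :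
    ∫ x : E, logPairing m (fun y ↦ f ‖y‖) x / ‖x‖ ^ finrank ℝ E =
      -logPairing m (fun y ↦ Real.log ‖y‖) e *
        (finrank ℝ E * volume.real (ball (0 : E) 1)) * f 0 := by
  have he0 : e ≠ 0 := by simp [← norm_ne_zero_iff, he]
  have : Nontrivial E := nontrivial_of_ne e 0 he0
  let a (k : ℕ) : ℝ := frobeniusInner E m (bellTensor m (k + 1) (fun y ↦ Real.log ‖y‖) e)
    (iteratedFDeriv ℝ m (fun y ↦ Real.log ‖y‖) e)
  let S (r : ℝ) : ℝ := ∑ k ∈ Finset.range m, eulerDeriv^[k + 1] f r * a k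
  have ha : a 0 = logPairing m (fun y ↦ Real.log ‖y‖) e := by
    simp [a, logPairing, bellTensor_one hm (contDiffAt_log_norm he0), he]
  calc ∫ x : E, logPairing m (fun y ↦ f ‖y‖) x / ‖x‖ ^ finrank ℝ E
      = ∫ x : E, S ‖x‖ / ‖x‖ ^ finrank ℝ E := by
        refine integral_congr_ae ?_
        filter_upwards [compl_mem_ae_iff.2 (measure_singleton 0)] with x hx
        rw [logPairing_comp_norm hm hf he hx]
    _ = finrank ℝ E * (volume.real (ball (0 : E) 1) * ∫ r in Set.Ioi (0 : ℝ), r⁻¹ * S r) := by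
        rw [integral_fun_norm_addHaar volume fun r ↦ S r / r ^ finrank ℝ E, nsmul_eq_mul,
          smul_eq_mul]
        congr 2
        refine setIntegral_congr_fun measurableSet_Ioi fun r (hr : 0 < r) ↦ ?_
        rw [← pow_sub_one_mul (finrank_pos (R := ℝ) (M := E)).ne' r, smul_eq_mul]
        field_simp
    _ = _ := by
        rw [integral_inv_mul_sum_iterate_eulerDeriv hm hf hsupp, ha]
        ring

end Radial

section Integrability

variable {E : Type*} [NormedAddCommGroup E] [InnerProductSpace ℝ E] [FiniteDimensional ℝ E]
  [Nontrivial E] [MeasurableSpace E] [BorelSpace E]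

theorem locallyIntegrable_norm_pow_div_smul_iteratedFDeriv_log_norm {m : ℕ} (hm : m ≠ 0) :
    LocallyIntegrable fun x : E ↦ (‖x‖ ^ (2 * m) / ‖x‖ ^ finrank ℝ E) •
      iteratedFDeriv ℝ m (fun y : E ↦ Real.log ‖y‖) x := by
  obtain ⟨e, he⟩ := exists_norm_eq E zero_le_one
  refine locallyIntegrable_of_norm_le_rpow (Nat.one_le_iff_ne_zero.2 finrank_pos.ne')
    (C := ‖iteratedFDeriv ℝ m (fun y : E ↦ Real.log ‖y‖) e‖) (α := finrank ℝ E - m)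
    (by simpa using Nat.pos_of_ne_zero hm) ?_ ?_
  · filter_upwards [compl_mem_ae_iff.2 (measure_singleton 0)] with x hx
    have hx' : 0 < ‖x‖ := norm_pos_iff.2 hx
    rw [← norm_pow_mul_norm_iteratedFDeriv_log_norm hm he hx, norm_smul, neg_sub,
      Real.rpow_sub hx', Real.rpow_natCast, Real.rpow_natCast, norm_div, norm_pow, norm_pow,
      norm_norm, two_mul, pow_add]
    exact le_of_eq (by ring)
  · have hweight : Measurable fun x : E ↦ ‖x‖ ^ (2 * m) / ‖x‖ ^ finrank ℝ E :=
      (measurable_norm.pow_const _).div (measurable_norm.pow_const _)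
    exact hweight.aestronglyMeasurable.smul (aestronglyMeasurable_iteratedFDeriv_log_norm m)

theorem integrable_logPairing_div {m : ℕ} (hm : m ≠ 0) {φ : E → ℝ} (hφ : ContDiff ℝ m φ)
    (hsupp : HasCompactSupport φ) :
    Integrable fun x ↦ logPairing m φ x / ‖x‖ ^ finrank ℝ E := by
  let T (x : E) := (‖x‖ ^ (2 * m) / ‖x‖ ^ finrank ℝ E) •
    iteratedFDeriv ℝ m (fun y : E ↦ Real.log ‖y‖) x
  have hT : LocallyIntegrable T := locallyIntegrable_norm_pow_div_smul_iteratedFDeriv_log_norm hm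
  have hcont : Continuous (iteratedFDeriv ℝ m φ) := hφ.continuous_iteratedFDeriv le_rfl
  have hdom : Integrable fun x ↦ ‖iteratedFDeriv ℝ m φ x‖ • ‖T x‖ :=
    LocallyIntegrable.integrable_smul_left_of_hasCompactSupport (fun x ↦ (hT x).norm) hcont.norm
      (hsupp.iteratedFDeriv m).norm
  have hpairing (x : E) : logPairing m φ x / ‖x‖ ^ finrank ℝ E =
      frobeniusInner E m (iteratedFDeriv ℝ m φ x) (T x) := by
    rw [logPairing, map_smul, smul_eq_mul]
    ring
  simp only [hpairing]
  refine (hdom.const_mul ‖frobeniusInner E m‖).mono'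
    ((frobeniusInner E m).aestronglyMeasurable_comp₂ hcont.aestronglyMeasurable
      hT.aestronglyMeasurable) (Eventually.of_forall fun x ↦ ?_)
  rw [smul_eq_mul, ← mul_assoc]
  exact (frobeniusInner E m).le_opNorm₂ _ _

end Integrability

section ParametricIntegral

variable {X F : Type*} [TopologicalSpace X] [CompactSpace X] [MeasurableSpace X]
  [BorelSpace X] {μ : Measure X} [IsFiniteMeasure μ] [NormedAddCommGroup F]

theorem integrable_of_continuous_of_compactSpace {f : X → F} (hf : Continuous f) :
    Integrable f μ :=
  hf.integrable_of_hasCompactSupport (HasCompactSupport.of_compactSpace f)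

variable {E : Type*} [NormedAddCommGroup E] [NormedSpace ℝ E] [LocallyCompactSpace E]
  [NormedSpace ℝ F]

theorem hasFDerivAt_integral_of_continuous {f : E → X → F} {f' : E → X → E →L[ℝ] F}
    (hf : ∀ x, Continuous (f x)) (hf' : Continuous f'.uncurry)
    (hderiv : ∀ x a, HasFDerivAt (fun y ↦ f y a) (f' x a) x) (x : E) :
    HasFDerivAt (fun y ↦ ∫ a, f y a ∂μ) (∫ a, f' x a ∂μ) x := by
  obtain ⟨K, hK, hxK⟩ := exists_compact_mem_nhds x
  obtain ⟨C, hC⟩ := (hK.prod isCompact_univ).exists_bound_of_continuousOn hf'.continuousOn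
  refine hasFDerivAt_integral_of_dominated_of_fderiv_le (bound := fun _ ↦ C) hxK
    (Eventually.of_forall fun y ↦ (integrable_of_continuous_of_compactSpace (hf y)).1)
    (integrable_of_continuous_of_compactSpace (hf x))
    (integrable_of_continuous_of_compactSpace hf'.curry_right).1
    (Eventually.of_forall fun a y hy ↦ hC (y, a) ⟨hy, Set.mem_univ a⟩)
    (integrable_const C) (Eventually.of_forall fun a y _ ↦ hderiv y a)

theorem hasFTaylorSeriesUpTo_integral [SecondCountableTopology X]
    {n : WithTop ℕ∞} {f : E → X → F} {p : E → X → FormalMultilinearSeries ℝ E F}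
    (hp : ∀ a, HasFTaylorSeriesUpTo n (fun x ↦ f x a) (fun x ↦ p x a))
    (hcont : ∀ k : ℕ, k ≤ n → Continuous fun q : E × X ↦ p q.1 q.2 k) :
    HasFTaylorSeriesUpTo n (fun x ↦ ∫ a, f x a ∂μ) (fun x k ↦ ∫ a, p x a k ∂μ) := by
  have hcont' {k : ℕ} (hk : k ≤ n) (x : E) : Continuous fun a ↦ p x a k :=
    (hcont k hk).curry_right
  refine ⟨fun x ↦ ?_, fun k hk x ↦ ?_, fun k hk ↦ ?_⟩
  · have hint : Integrable (fun a ↦ p x a 0) μ :=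
      integrable_of_continuous_of_compactSpace (hcont' (by simp) x)
    refine (ContinuousMultilinearMap.integral_apply hint 0).trans ?_
    exact integral_congr_ae (Eventually.of_forall fun a ↦ (hp a).zero_eq x)
  · let curry := continuousMultilinearCurryLeftEquiv ℝ (fun _ : Fin (k + 1) ↦ E) F
    have hk' : ((k + 1 : ℕ) : WithTop ℕ∞) ≤ n := ENat.add_one_natCast_le_withTop_of_lt hk
    have hderiv := hasFDerivAt_integral_of_continuous (μ := μ) (f := fun y a ↦ p y a k)
      (f' := fun y a ↦ curry (p y a (k + 1))) (hcont' hk.le)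
      (curry.continuous.comp (hcont (k + 1) hk')) (fun y a ↦ (hp a).fderiv k hk y) x
    have hcurry : ∫ a, curry (p x a (k + 1)) ∂μ = curry (∫ a, p x a (k + 1) ∂μ) :=
      curry.toContinuousLinearEquiv.integral_comp_comm _
    rwa [hcurry] at hderiv
  · simpa using continuous_parametric_integral_of_continuous (μ := μ) (hcont k hk) isCompact_univ

end ParametricIntegral

section RotationMean

variable {E : Type*} [NormedAddCommGroup E] [InnerProductSpace ℝ E] [FiniteDimensional ℝ E]

instance compactSpace_unitary : CompactSpace (unitary (E →L[ℝ] E)) := by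
  refine isCompact_iff_compactSpace.1
    ((isCompact_closedBall (0 : E →L[ℝ] E) 1).of_isClosed_subset isClosed_unitary fun U hU ↦ ?_)
  rw [mem_closedBall_zero_iff]
  exact U.opNorm_le_bound zero_le_one fun x ↦ by
    rw [one_mul, Unitary.norm_map ⟨U, hU⟩]

variable (E) in
/-- The normalized Haar measure of the orthogonal group of `E`, realized as the unitary elements of
the star algebra `E →L[ℝ] E`. -/
def unitaryHaar : Measure (unitary (E →L[ℝ] E)) :=
  Measure.haarMeasure ⊤

instance : (unitaryHaar E).IsHaarMeasure :=
  inferInstanceAs (Measure.haarMeasure ⊤).IsHaarMeasure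

instance : IsProbabilityMeasure (unitaryHaar E) :=
  ⟨Measure.haarMeasure_self (K₀ := (⊤ : TopologicalSpace.PositiveCompacts _))⟩

/-- The average of `φ` over all rotations. Rotating by `g⁻¹` and not by `g` makes left invariance
of the Haar measure sufficient. -/
def rotationMean (φ : E → ℝ) (x : E) : ℝ :=
  ∫ g, φ (Unitary.linearIsometryEquiv g⁻¹ x) ∂unitaryHaar E

theorem continuous_unitary_inv_apply :
    Continuous fun q : E × unitary (E →L[ℝ] E) ↦ Unitary.linearIsometryEquiv q.2⁻¹ q.1 :=
  (continuous_subtype_val.comp (continuous_inv.comp continuous_snd)).clm_apply continuous_fst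

theorem rotationMean_zero (φ : E → ℝ) : rotationMean φ 0 = φ 0 := by
  simp [rotationMean]

theorem rotationMean_linearIsometryEquiv (φ : E → ℝ) (S : E ≃ₗᵢ[ℝ] E) (x : E) :
    rotationMean φ (S x) = rotationMean φ x := by
  rw [rotationMean, rotationMean,
    ← integral_mul_left_eq_self _ (Unitary.linearIsometryEquiv.symm S)]
  simp [map_mul]

theorem rotationMean_eq_comp_norm (φ : E → ℝ) {e : E} (he : ‖e‖ = 1) :
    rotationMean φ = fun x ↦ rotationMean φ (‖x‖ • e) := by
  ext x
  obtain ⟨R, hR⟩ := exists_norm_smul_linearIsometryEquiv_eq he x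
  conv_lhs => rw [← hR, ← map_smul, rotationMean_linearIsometryEquiv]

theorem hasCompactSupport_rotationMean {φ : E → ℝ} (hφ : HasCompactSupport φ) :
    HasCompactSupport (rotationMean φ) := by
  obtain ⟨K, hK⟩ := hφ.isCompact.isBounded.subset_closedBall 0
  refine HasCompactSupport.intro (isCompact_closedBall 0 K) fun x hx ↦ ?_
  have hvanish (g : unitary (E →L[ℝ] E)) : φ (Unitary.linearIsometryEquiv g⁻¹ x) = 0 :=
    image_eq_zero_of_notMem_tsupport fun h ↦ hx (by simpa using hK h)
  simp only [rotationMean, hvanish, integral_zero]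

theorem continuous_iteratedFDeriv_comp_unitary_inv {φ : E → ℝ} {k : ℕ} (hφ : ContDiff ℝ k φ) :
    Continuous fun q : E × unitary (E →L[ℝ] E) ↦
      iteratedFDeriv ℝ k (φ ∘ Unitary.linearIsometryEquiv q.2⁻¹) q.1 := by
  let L (q : E × unitary (E →L[ℝ] E)) : E →L[ℝ] E := (q.2⁻¹ : unitary (E →L[ℝ] E))
  have hL : Continuous L := continuous_subtype_val.comp (continuous_inv.comp continuous_snd)
  have hderiv (q : E × unitary (E →L[ℝ] E)) :
      iteratedFDeriv ℝ k (φ ∘ Unitary.linearIsometryEquiv q.2⁻¹) q.1 =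
        ContinuousMultilinearMap.compContinuousLinearMapContinuousMultilinear ℝ
          (fun _ : Fin k ↦ E) (fun _ ↦ E) ℝ (fun _ ↦ L q) (iteratedFDeriv ℝ k φ (L q q.1)) :=
    (L q).iteratedFDeriv_comp_right hφ q.1 le_rfl
  simp only [hderiv]
  exact ((ContinuousMultilinearMap.cont _).comp (continuous_pi fun _ ↦ hL)).clm_apply
    ((hφ.continuous_iteratedFDeriv le_rfl).comp (hL.clm_apply continuous_fst))

theorem hasFTaylorSeriesUpTo_rotationMean {φ : E → ℝ} {n : ℕ} (hφ : ContDiff ℝ n φ) :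
    HasFTaylorSeriesUpTo n (rotationMean φ) fun x k ↦
      ∫ g, iteratedFDeriv ℝ k (φ ∘ Unitary.linearIsometryEquiv g⁻¹) x ∂unitaryHaar E :=
  hasFTaylorSeriesUpTo_integral
    (p := fun x g ↦ ftaylorSeries ℝ (φ ∘ Unitary.linearIsometryEquiv g⁻¹) x)
    (fun g ↦ (hφ.comp (Unitary.linearIsometryEquiv g⁻¹).contDiff).ftaylorSeries)
    fun _ hk ↦ continuous_iteratedFDeriv_comp_unitary_inv (hφ.of_le hk)

theorem contDiff_rotationMean {φ : E → ℝ} {n : ℕ} (hφ : ContDiff ℝ n φ) :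
    ContDiff ℝ n (rotationMean φ) :=
  (hasFTaylorSeriesUpTo_rotationMean hφ).contDiff

theorem logPairing_rotationMean {φ : E → ℝ} {m : ℕ} (hφ : ContDiff ℝ m φ) (x : E) :
    logPairing m (rotationMean φ) x =
      ∫ g, logPairing m φ (Unitary.linearIsometryEquiv g⁻¹ x) ∂unitaryHaar E := by
  have hint : Integrable
      (fun g ↦ iteratedFDeriv ℝ m (φ ∘ Unitary.linearIsometryEquiv g⁻¹) x) (unitaryHaar E) :=
    integrable_of_continuous_of_compactSpace
      (continuous_iteratedFDeriv_comp_unitary_inv hφ).curry_right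
  have hpair : frobeniusInner E m (iteratedFDeriv ℝ m (rotationMean φ) x)
      (iteratedFDeriv ℝ m (fun y ↦ Real.log ‖y‖) x) =
        ∫ g, frobeniusInner E m (iteratedFDeriv ℝ m (φ ∘ Unitary.linearIsometryEquiv g⁻¹) x)
          (iteratedFDeriv ℝ m (fun y ↦ Real.log ‖y‖) x) ∂unitaryHaar E := by
    rw [← (hasFTaylorSeriesUpTo_rotationMean hφ).eq_iteratedFDeriv le_rfl x]
    have hcomm := ((frobeniusInner E m).flip
      (iteratedFDeriv ℝ m (fun y ↦ Real.log ‖y‖) x)).integral_comp_comm hint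
    simpa only [ContinuousLinearMap.flip_apply] using hcomm.symm
  simp only [← logPairing_comp_linearIsometryEquiv]
  simp only [logPairing, integral_const_mul, hpair]

theorem integral_logPairing_rotationMean_div [Nontrivial E] [MeasurableSpace E] [BorelSpace E]
    {m : ℕ} (hm : m ≠ 0) {φ : E → ℝ} (hφ : ContDiff ℝ m φ) (hsupp : HasCompactSupport φ) :
    ∫ x, logPairing m (rotationMean φ) x / ‖x‖ ^ finrank ℝ E =
      ∫ x, logPairing m φ x / ‖x‖ ^ finrank ℝ E := by
  let G (x : E) : ℝ := logPairing m φ x / ‖x‖ ^ finrank ℝ E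
  let rot (g : unitary (E →L[ℝ] E)) (x : E) : E := Unitary.linearIsometryEquiv g⁻¹ x
  have hrot (g : unitary (E →L[ℝ] E)) : MeasurePreserving (rot g) :=
    (Unitary.linearIsometryEquiv g⁻¹).measurePreserving
  have hskew : MeasurePreserving (fun p : unitary (E →L[ℝ] E) × E ↦ (p.1, rot p.1 p.2))
      ((unitaryHaar E).prod volume) ((unitaryHaar E).prod volume) :=
    (MeasurePreserving.id _).skew_product
      (continuous_unitary_inv_apply.comp continuous_swap).measurable
      (Eventually.of_forall fun g ↦ (hrot g).map_eq)
  have hint : Integrable (fun p : unitary (E →L[ℝ] E) × E ↦ G (rot p.1 p.2))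
      ((unitaryHaar E).prod volume) :=
    hskew.integrable_comp_of_integrable
      ((integrable_logPairing_div hm hφ hsupp).comp_snd (unitaryHaar E))
  calc ∫ x, logPairing m (rotationMean φ) x / ‖x‖ ^ finrank ℝ E
      = ∫ x : E, (∫ g, G (rot g x) ∂unitaryHaar E) := by
        simp only [G, rot, LinearIsometryEquiv.norm_map, integral_div, logPairing_rotationMean hφ]
    _ = ∫ g, (∫ x : E, G (rot g x)) ∂unitaryHaar E := (integral_integral_swap hint).symm
    _ = ∫ _ : unitary (E →L[ℝ] E), (∫ x : E, G x) ∂unitaryHaar E := by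
        congr with g
        exact (hrot g).integral_comp
          (Unitary.linearIsometryEquiv g⁻¹).toHomeomorph.measurableEmbedding G
    _ = ∫ x, G x := by simp

theorem statement6_general [MeasurableSpace E] [BorelSpace E] {m : ℕ} (hm : m ≠ 0) {φ : E → ℝ}
    (hφ : ContDiff ℝ m φ) (hsupp : HasCompactSupport φ) {e : E} (he : ‖e‖ = 1) :
    ∫ x, logPairing m φ x / ‖x‖ ^ finrank ℝ E =
      -logPairing m (fun y ↦ Real.log ‖y‖) e *
        (finrank ℝ E * volume.real (ball (0 : E) 1)) * φ 0 := by
  have he0 : e ≠ 0 := by simp [← norm_ne_zero_iff, he]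
  have : Nontrivial E := nontrivial_of_ne e 0 he0
  let f (r : ℝ) : ℝ := rotationMean φ (r • e)
  have hf : ContDiff ℝ m f := (contDiff_rotationMean hφ).comp (contDiff_id.smul contDiff_const)
  have hfsupp : HasCompactSupport f :=
    (hasCompactSupport_rotationMean hsupp).comp_isClosedEmbedding (isClosedEmbedding_smul_left he0)
  rw [← integral_logPairing_rotationMean_div hm hφ hsupp, rotationMean_eq_comp_norm φ he,
    integral_logPairing_comp_norm_div hm hf hfsupp he]
  simp only [f, zero_smul, rotationMean_zero]

end RotationMean

section Euclidean

variable {N : ℕ}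

theorem sum_mixedPartial_mul_mixedPartial (m : ℕ) (u v : EuclideanSpace ℝ (Fin N) → ℝ)
    (x : EuclideanSpace ℝ (Fin N)) :
    ∑ i : Fin m → Fin N, mixedPartial N m u i x * mixedPartial N m v i x =
      frobeniusInner (EuclideanSpace ℝ (Fin N)) m (iteratedFDeriv ℝ m u x)
        (iteratedFDeriv ℝ m v x) := by
  simp only [frobeniusInner_eq_sum (EuclideanSpace.basisFun (Fin N) ℝ), mixedPartial,
    EuclideanSpace.basisFun_apply]

theorem logPairing_div_norm_pow_eq_sum_mixedPartial (u : EuclideanSpace ℝ (Fin N) → ℝ)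
    (x : EuclideanSpace ℝ (Fin N)) :
    logPairing N u x / ‖x‖ ^ N =
      ‖x‖ ^ N * ∑ i : Fin N → Fin N, mixedPartial N N u i x * mixedPartial N N (logNorm N) i x := by
  rw [sum_mixedPartial_mul_mixedPartial, logPairing, mul_div_right_comm, two_mul, pow_add,
    mul_self_div_self]
  rfl

theorem ell_eq_logPairing (hN : 0 < N) :
    ell N hN =
      logPairing N (fun y ↦ Real.log ‖y‖) (EuclideanSpace.single (⟨0, hN⟩ : Fin N) (1 : ℝ)) := by
  simp only [ell, sq, sum_mixedPartial_mul_mixedPartial, logPairing, PiLp.norm_single, norm_one,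
    one_pow, one_mul]
  rfl

end Euclidean

/-- `log|x|` is a fundamental solution, up to the factor `-ℓ_N ω_{N-1}`, of the
operator `(-1)^N ∑ ∂^N(|x|^N ∂^N ·)`: for every test function `φ`,
`∫ |x|^N (∇^N φ)·(∇^N log|x|) = -ℓ_N ω_{N-1} φ(0)`. -/
theorem statement6 (N : ℕ) (hN : 2 ≤ N)
    (φ : EuclideanSpace ℝ (Fin N) → ℝ)
    (hφ : ContDiff ℝ (⊤ : ℕ∞) φ) (hsupp : HasCompactSupport φ) :
    ∫ x, ‖x‖ ^ N * ∑ i : Fin N → Fin N,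
        mixedPartial N N φ i x * mixedPartial N N (logNorm N) i x =
      -(ell N (by omega)) * omegaSphere N * φ 0 := by
  simpa only [finrank_euclideanSpace_fin, logPairing_div_norm_pow_eq_sum_mixedPartial,
    ell_eq_logPairing, omegaSphere, Measure.real] using
    statement6_general (m := N) (by omega) (hφ.of_le (mod_cast le_top)) hsupp
      (e := EuclideanSpace.single ⟨0, by omega⟩ 1) (by simp)
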